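/- Let g be a compactly driven system with the USP and let h : ←U → X be given by E(←u) = {h(←u)}. Define the solution map Ψ : U^ℤ → X^ℤ by (Ψ(ū))_n = h(←u^n) for n ∈ ℤ. Then for every input ū, Ψ(ū) is the unique solution for ū, and Ψ is continuous when U^ℤ and X^ℤ carry the product topologies. -/

import Mathlib

open Metric Set Filter Topology Function

universe u' v'

variable {U : Type u'} {X : Type v'}

/-- `proc g u j m x = φ_ū(m+j, m, x)`: apply `g_{u m}, g_{u (m+1)}, …, g_{u (m+j-1)}`
to `x`, in that order. -/
def proc (g : U → X → X) (u : ℤ → U) : ℕ → ℤ → X → X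
  | 0, _, x => x
  | j + 1, m, x => g (u (m + j)) (proc g u j m x)

/-- A solution of the driven system `g` for the input `u`. -/
def IsSolution (g : U → X → X) (u : ℤ → U) (x : ℤ → X) : Prop :=
  ∀ n : ℤ, x (n + 1) = g (u n) (x n)

/-- The unique solution property: every input has exactly one solution. -/
def USP (g : U → X → X) : Prop :=
  ∀ u : ℤ → U, ∃! x : ℤ → X, IsSolution g u x

/-- The set of reachable states at time `n`: `X_n(ū) = ⋂_{j ≥ 1} φ_ū(n, n - j, X)`. -/
def reach (g : U → X → X) (u : ℤ → U) (n : ℤ) : Set X :=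
  ⋂ j : ℕ, Set.range (proc g u (j + 1) (n - (j + 1)))

/-- The reachable set `X_U = ⋃ {X_n(ū) : n ∈ ℤ, ū ∈ U^ℤ}`. -/
def reachSet (g : U → X → X) : Set X :=
  ⋃ u : ℤ → U, ⋃ n : ℤ, reach g u n

/-- The left-infinite part `←u^n = (…, u_{n-2}, u_{n-1})` of an input `u`;
coordinate `k : ℕ` corresponds to time `n - 1 - k` (so `0` is the most recent one). -/
def leftOf (u : ℤ → U) (n : ℤ) : ℕ → U := fun k => u (n - 1 - (k : ℤ))

/-- The right-shift map `r : (…, u_{-2}, u_{-1}) ↦ (…, u_{-3}, u_{-2})`. -/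
def shift (w : ℕ → U) : ℕ → U := fun k => w (k + 1)

/-- The concatenation map `σ_v : (…, u_{-2}, u_{-1}) ↦ (…, u_{-2}, u_{-1}, v)`. -/
def append (v : U) (w : ℕ → U) : ℕ → U := fun k => Nat.casesOn k v w

/-- `encProc g w j = φ_ū(0, -j, ·)` for any input `ū` whose left-infinite part is `w`. -/
def encProc (g : U → X → X) : (ℕ → U) → ℕ → X → X
  | _, 0, x => x
  | w, j + 1, x => g (w 0) (encProc g (shift w) j x)

/-- The encoding map `E(←u) = X_0(ū) = ⋂_{j ≥ 1} φ_ū(0, -j, X)`. -/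
def enc (g : U → X → X) (w : ℕ → U) : Set X :=
  ⋂ j : ℕ, Set.range (encProc g w (j + 1))

/-- The map `g̃_v : (…, x_{-2}, x_{-1}) ↦ (…, x_{-2}, x_{-1}, g(v, x_{-1}))`. -/
def tildeg (g : U → X → X) (v : U) (x : ℕ → X) : ℕ → X :=
  fun k => Nat.casesOn k (g v (x 0)) x

/-- The Hausdorff semi-distance `dist(A, B) = sup_{a ∈ A} inf_{b ∈ B} d(a, b)`. -/
noncomputable def semiDist [MetricSpace X] (A B : Set X) : ℝ :=
  sSup ((fun a => Metric.infDist a B) '' A)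

theorem sol_eq_encProc (g : U → X → X) (u : ℤ → U) (x : ℤ → X) (hx : IsSolution g u x)
    (j : ℕ) : ∀ n : ℤ, x n = encProc g (leftOf u n) j (x (n - j)) := by
  induction j with
  | zero => intro n; simp [encProc]
  | succ j ih =>
    intro n
    have h1 : shift (leftOf u n) = leftOf u (n - 1) := by
      funext k
      simp only [shift, leftOf]
      congr 1
      push_cast
      ring
    have h2 : leftOf u n 0 = u (n - 1) := by simp [leftOf]
    have h3 := hx (n - 1)
    have h4 := ih (n - 1)
    have h5 : n - 1 - (j : ℤ) = n - ((j + 1 : ℕ) : ℤ) := by push_cast; ring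
    rw [h5] at h4
    rw [sub_add_cancel] at h3
    rw [encProc, h1, h2, ← h4, h3]

theorem sol_mem_enc (g : U → X → X) (u : ℤ → U) (x : ℤ → X) (hx : IsSolution g u x)
    (n : ℤ) : x n ∈ enc g (leftOf u n) :=
  Set.mem_iInter.2 fun j => ⟨_, (sol_eq_encProc g u x hx (j + 1) n).symm⟩

theorem continuous_encProc [TopologicalSpace X] [TopologicalSpace U]
    (g : U → X → X) (hg : Continuous fun p : U × X => g p.1 p.2) (j : ℕ) :
    Continuous fun p : (ℕ → U) × X => encProc g p.1 j p.2 := by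
  induction j with
  | zero => simpa [encProc] using continuous_snd
  | succ j ih =>
    have hs : Continuous fun p : (ℕ → U) × X => (shift p.1, p.2) := by
      refine Continuous.prodMk (continuous_pi fun k => ?_) continuous_snd
      exact (continuous_apply (k + 1)).comp continuous_fst
    exact hg.comp (((continuous_apply 0).comp continuous_fst).prodMk (ih.comp hs))

theorem isClosed_enc_graph [TopologicalSpace X] [T2Space X] [CompactSpace X] [TopologicalSpace U]
    (g : U → X → X) (hg : Continuous fun p : U × X => g p.1 p.2) :
    IsClosed {p : (ℕ → U) × X | p.2 ∈ enc g p.1} := by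
  have key : {p : (ℕ → U) × X | p.2 ∈ enc g p.1} = ⋂ j : ℕ, (Prod.fst ''
      {q : ((ℕ → U) × X) × X | encProc g q.1.1 (j + 1) q.2 = q.1.2}) := by
    ext p
    simp [enc]
  rw [key]
  refine isClosed_iInter fun j => isClosedMap_fst_of_compactSpace _ (isClosed_eq ?_ ?_)
  · exact (continuous_encProc g hg (j + 1)).comp
      ((continuous_fst.comp continuous_fst).prodMk continuous_snd)
  · exact continuous_snd.comp continuous_fst

theorem continuous_h [TopologicalSpace X] [T2Space X] [CompactSpace X] [TopologicalSpace U]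
    (g : U → X → X) (hg : Continuous fun p : U × X => g p.1 p.2)
    (h : (ℕ → U) → X) (hh : ∀ w : ℕ → U, enc g w = {h w}) : Continuous h := by
  refine continuous_iff_isClosed.2 fun C hC => ?_
  have key : h ⁻¹' C = Prod.fst '' ({p : (ℕ → U) × X | p.2 ∈ enc g p.1} ∩ Prod.snd ⁻¹' C) := by
    ext w
    simp [hh]
  rw [key]
  exact isClosedMap_fst_of_compactSpace _
    ((isClosed_enc_graph g hg).inter (hC.preimage continuous_snd))

/-- under the USP, the solution map `Ψ(ū) = (h(←u^n))_{n ∈ ℤ}` produces,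
for every input, the unique solution, and `Ψ` is continuous in the product topologies. -/
theorem stmt_15 [MetricSpace X] [CompactSpace X] [MetricSpace U] [CompactSpace U]
    (g : U → X → X) (hg : Continuous fun p : U × X => g p.1 p.2)
    (husp : USP g) (h : (ℕ → U) → X) (hh : ∀ w : ℕ → U, enc g w = {h w}) :
    (∀ u : ℤ → U, IsSolution g u (fun n => h (leftOf u n)) ∧
        ∀ x : ℤ → X, IsSolution g u x → x = fun n => h (leftOf u n)) ∧
      Continuous (fun (u : ℤ → U) (n : ℤ) => h (leftOf u n)) := by
  have huniq : ∀ (u : ℤ → U) (x : ℤ → X), IsSolution g u x →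
      x = fun n => h (leftOf u n) := by
    intro u x hx
    funext n
    have := sol_mem_enc g u x hx n
    rw [hh] at this
    exact this
  refine ⟨fun u => ⟨?_, huniq u⟩, continuous_pi fun n => ?_⟩
  · obtain ⟨x, hx, -⟩ := husp u
    have hx' : IsSolution g u x := hx
    rw [← huniq u x hx']
    exact hx'
  · exact (continuous_h g hg h hh).comp (continuous_pi fun k => continuous_apply _)
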